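/- arXiv:1005.1839 — 2 statements merged into one kernel-verified Lean document; each statement's English description precedes it below -/
import Mathlib

section
/- Let d, e, f be the permutations of {0,…,12} given in cycle notation by d = (0 12)(1 10)(3 5)(6 7), e = (0 10)(3 4)(9 2)(5 8), f = (0 4)(9 12)(1 6)(2 11), and d' = (0 4)(2 3)(6 8)(9 10), e' = (0 12)(6 9)(5 11)(1 4), f' = (0 10)(5 1)(2 7)(3 12). Let G be the subgroup of Sym(13) × Sym(13) generated by (d,d'), (e,e'), (f,f'), and let A = {(σ,τ) ∈ G : σ(0) = 0}, B = {(σ,τ) ∈ G : τ(0) = 0}. Then for every (σ,τ) ∈ G the number of fixed points of σ equals the number of fixed points of τ; A and B are Gassmann equivalent subgroups of G of index 13; and A and B are not conjugate in G. -/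
open Equiv

/-- d = (0 12)(1 10)(3 5)(6 7) -/
def d : Perm (Fin 13) := swap 0 12 * swap 1 10 * swap 3 5 * swap 6 7
/-- e = (0 10)(3 4)(9 2)(5 8) -/
def e : Perm (Fin 13) := swap 0 10 * swap 3 4 * swap 9 2 * swap 5 8
/-- f = (0 4)(9 12)(1 6)(2 11) -/
def f : Perm (Fin 13) := swap 0 4 * swap 9 12 * swap 1 6 * swap 2 11
/-- d' = (0 4)(2 3)(6 8)(9 10) -/
def d' : Perm (Fin 13) := swap 0 4 * swap 2 3 * swap 6 8 * swap 9 10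
/-- e' = (0 12)(6 9)(5 11)(1 4) -/
def e' : Perm (Fin 13) := swap 0 12 * swap 6 9 * swap 5 11 * swap 1 4
/-- f' = (0 10)(5 1)(2 7)(3 12) -/
def f' : Perm (Fin 13) := swap 0 10 * swap 5 1 * swap 2 7 * swap 3 12

/-- The subgroup of Sym(13) × Sym(13) generated by (d,d'), (e,e'), (f,f'). -/
def G₀ : Subgroup (Perm (Fin 13) × Perm (Fin 13)) :=
  Subgroup.closure {(d, d'), (e, e'), (f, f')}

/-- A = {(σ,τ) ∈ G₀ : σ 0 = 0}, the point stabilizer in the first action. -/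
def A : Subgroup G₀ where
  carrier := {g | (g : Perm (Fin 13) × Perm (Fin 13)).1 0 = 0}
  one_mem' := rfl
  mul_mem' := by
    intro x y hx hy
    simp only [Set.mem_setOf_eq] at *
    simp [Subgroup.coe_mul, Perm.mul_apply, hx, hy]
  inv_mem' := by
    intro x hx
    simp only [Set.mem_setOf_eq] at *
    conv_lhs => rw [← hx]
    simp

/-- B = {(σ,τ) ∈ G₀ : τ 0 = 0}, the point stabilizer in the second action. -/
def B : Subgroup G₀ where
  carrier := {g | (g : Perm (Fin 13) × Perm (Fin 13)).2 0 = 0}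
  one_mem' := rfl
  mul_mem' := by
    intro x y hx hy
    simp only [Set.mem_setOf_eq] at *
    simp [Subgroup.coe_mul, Perm.mul_apply, hx, hy]
  inv_mem' := by
    intro x hx
    simp only [Set.mem_setOf_eq] at *
    conv_lhs => rw [← hx]
    simp


/-- Incidence of points and lines, as a 0/1 function (perfect difference set {0,1,3,9} mod 13). -/
def inc (x y : Fin 13) : ℕ :=
  if x + y = 0 ∨ x + y = 1 ∨ x + y = 3 ∨ x + y = 9 then 1 else 0

theorem inc_inv : ∀ p ∈ G₀, ∀ x y, inc (p.1 x) (p.2 y) = inc x y := by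
  intro p hp
  induction hp using Subgroup.closure_induction with
  | mem p hp =>
    simp only [Set.mem_insert_iff, Set.mem_singleton_iff] at hp
    rcases hp with rfl | rfl | rfl <;> decide +kernel
  | one => intro x y; rfl
  | mul p q _ _ h1 h2 => intro x y; simp [h1, h2]
  | inv p _ h =>
    intro x y
    have := h (p.1⁻¹ x) (p.2⁻¹ y)
    simpa using this.symm

theorem inc_row : ∀ x x' : Fin 13, ∑ y, inc x y * inc x' y = if x' = x then 4 else 1 := by
  decide +kernel

theorem inc_col : ∀ y y' : Fin 13, ∑ x, inc x y' * inc x y = if y' = y then 4 else 1 := by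
  decide +kernel

theorem sum_fix (s : Perm (Fin 13)) :
    ∑ x, (if s x = x then 4 else 1) = 13 + 3 * Nat.card {x : Fin 13 // s x = x} := by
  rw [Nat.card_eq_fintype_card, Fintype.card_subtype, Finset.card_filter, Finset.mul_sum]
  have : (13 : ℕ) = ∑ _x : Fin 13, 1 := by simp
  refine Eq.trans ?_ (congrArg (· + _) this.symm)
  rw [← Finset.sum_add_distrib]
  refine Finset.sum_congr rfl fun x _ => ?_
  split_ifs <;> rfl

theorem fix_eq : ∀ p ∈ G₀,
    Nat.card {x : Fin 13 // p.1 x = x} = Nat.card {x : Fin 13 // p.2 x = x} := by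
  intro p hp
  have h : ∑ x, (if p.1 x = x then 4 else 1) = ∑ x, (if p.2 x = x then 4 else 1) := by
    calc _ = ∑ x, ∑ y, inc x y * inc (p.1 x) y := by
            refine Finset.sum_congr rfl fun x _ => (inc_row _ _).symm
      _ = ∑ x, ∑ y, inc x (p.2 y) * inc (p.1 x) (p.2 y) := by
            refine Finset.sum_congr rfl fun x _ => ?_
            exact (Equiv.sum_comp p.2 (fun y => inc x y * inc (p.1 x) y)).symm
      _ = ∑ y, ∑ x, inc x (p.2 y) * inc x y := by
            rw [Finset.sum_comm]
            simp only [inc_inv p hp]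
      _ = _ := Finset.sum_congr rfl fun y _ => inc_col _ _
  rw [sum_fix, sum_fix] at h
  omega

def gd : G₀ := ⟨(d, d'), Subgroup.subset_closure (by simp)⟩
def ge : G₀ := ⟨(e, e'), Subgroup.subset_closure (by simp)⟩
def gf : G₀ := ⟨(f, f'), Subgroup.subset_closure (by simp)⟩

theorem trans1 : ∀ i : Fin 13, ∃ g : G₀, g.1.1 0 = i := by
  have h : ∀ i : Fin 13, ∃ w ∈ [1, gd, ge, gf, gf*gd, gd*ge, ge*gf, ge*gf*gd, gf*gd*ge, gd*ge*gf,
      gf*ge*gf*gd, gd*gf*gd*ge, ge*gd*ge*gf], w.1.1 0 = i := by decide +kernel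
  intro i
  obtain ⟨w, -, hw⟩ := h i
  exact ⟨w, hw⟩

theorem trans2 : ∀ i : Fin 13, ∃ g : G₀, g.1.2 0 = i := by
  have h : ∀ i : Fin 13, ∃ w ∈ [1, gd, ge, gf, ge*gd, gf*ge, gd*gf, gf*ge*gd, gd*gf*ge, ge*gd*gf,
      ge*gf*ge*gd, gf*gd*gf*ge, gd*ge*gd*gf], w.1.2 0 = i := by decide +kernel
  intro i
  obtain ⟨w, -, hw⟩ := h i
  exact ⟨w, hw⟩

/-- Double counting for a transitive action `φ` of a finite group on 13 points. -/
theorem count {G : Type*} [Group G] [Finite G] (φ : G →* Perm (Fin 13))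
    (ht : ∀ i, ∃ g : G, φ g 0 = i) (g : G) :
    13 * Nat.card {x : G // φ x 0 = 0 ∧ IsConj g x} =
      Nat.card (Σ x : {x : G // IsConj g x}, {i : Fin 13 // φ x.1 i = i}) := by
  have e1 : (Σ x : {x : G // IsConj g x}, {i : Fin 13 // φ x.1 i = i}) ≃
      (Σ i : Fin 13, {x : G // φ x i = i ∧ IsConj g x}) :=
    { toFun := fun a => ⟨a.2.1, a.1.1, a.2.2, a.1.2⟩
      invFun := fun a => ⟨⟨a.2.1, a.2.2.2⟩, a.1, a.2.2.1⟩
      left_inv := fun _ => rfl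
      right_inv := fun _ => rfl }
  rw [Nat.card_congr e1, Nat.card_sigma]
  have : ∀ i, Nat.card {x : G // φ x i = i ∧ IsConj g x} =
      Nat.card {x : G // φ x 0 = 0 ∧ IsConj g x} := by
    intro i
    obtain ⟨h, rfl⟩ := ht i
    refine (Nat.card_congr ((MulAut.conj h).toEquiv.subtypeEquiv fun x => ?_)).symm
    have hc : IsConj x (h * x * h⁻¹) := isConj_iff.2 ⟨h, rfl⟩
    have : IsConj g x ↔ IsConj g (h * x * h⁻¹) :=
      ⟨fun k => k.trans hc, fun k => k.trans hc.symm⟩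
    change _ ↔ φ (h * x * h⁻¹) (φ h 0) = φ h 0 ∧ IsConj g (h * x * h⁻¹)
    rw [← this]
    refine and_congr_left fun _ => ?_
    simp
  rw [Finset.sum_congr rfl fun i _ => this i]
  simp only [Finset.sum_const, Finset.card_univ, Fintype.card_fin, smul_eq_mul]

theorem index13 {G : Type*} [Group G] (φ : G →* Perm (Fin 13))
    (ht : ∀ i, ∃ g : G, φ g 0 = i) (H : Subgroup G) (hH : ∀ g, g ∈ H ↔ φ g 0 = 0) :
    H.index = 13 := by
  letI : MulAction G (Fin 13) := MulAction.compHom _ φ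
  have : H = MulAction.stabilizer G (0 : Fin 13) := by
    ext g; exact hH g
  rw [this, MulAction.index_stabilizer]
  have : MulAction.orbit G (0 : Fin 13) = Set.univ := by
    ext i; simp only [Set.mem_univ, iff_true]
    exact ht i
  rw [this]; simp

def pr1 : G₀ →* Perm (Fin 13) := (MonoidHom.fst _ _).comp G₀.subtype
def pr2 : G₀ →* Perm (Fin 13) := (MonoidHom.snd _ _).comp G₀.subtype

/-- Every element of `G₀` has equally many fixed points in its two coordinates; the point
stabilizers `A` and `B` are Gassmann equivalent of index 13, but not conjugate. -/
theorem fixed_gassmann_not_conjugate :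
    (∀ p ∈ G₀, Nat.card {x : Fin 13 // p.1 x = x} = Nat.card {x : Fin 13 // p.2 x = x}) ∧
    (∀ g : G₀,
      Nat.card ((A : Set G₀) ∩ {x : G₀ | IsConj g x} : Set G₀) =
      Nat.card ((B : Set G₀) ∩ {x : G₀ | IsConj g x} : Set G₀)) ∧
    A.index = 13 ∧ B.index = 13 ∧
    ¬ ∃ x : G₀, Subgroup.map (MulAut.conj x).toMonoidHom A = B := by
  refine ⟨fix_eq, ?_, index13 pr1 trans1 A fun _ => Iff.rfl,
    index13 pr2 trans2 B fun _ => Iff.rfl, ?_⟩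
  · intro g
    have h1 := count pr1 trans1 g
    have h2 := count pr2 trans2 g
    have h3 : Nat.card (Σ x : {x : G₀ // IsConj g x}, {i : Fin 13 // pr1 x.1 i = i}) =
        Nat.card (Σ x : {x : G₀ // IsConj g x}, {i : Fin 13 // pr2 x.1 i = i}) := by
      classical
      haveI := Fintype.ofFinite {x : G₀ // IsConj g x}
      rw [Nat.card_sigma, Nat.card_sigma]
      exact Finset.sum_congr rfl fun x _ => fix_eq x.1.1 x.1.2
    have h4 : Nat.card {x : G₀ // pr1 x 0 = 0 ∧ IsConj g x} =
        Nat.card {x : G₀ // pr2 x 0 = 0 ∧ IsConj g x} := by omega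
    exact h4
  · rintro ⟨x, hx⟩
    have key : ∀ b ∈ B, b.1.1 (x.1.1 0) = x.1.1 0 := by
      intro b hb
      rw [← hx] at hb
      obtain ⟨a, ha, rfl⟩ := hb
      have ha' : a.1.1 0 = 0 := ha
      simp [ha']
    have k1 := key (gd * gf * gd) (show (gd * gf * gd).1.2 0 = 0 by decide +kernel)
    have k2 := key (ge * gd * gf * ge * gf * ge)
      (show (ge * gd * gf * ge * gf * ge).1.2 0 = 0 by decide +kernel)
    have : ∀ i : Fin 13, (gd * gf * gd).1.1 i = i →
      (ge * gd * gf * ge * gf * ge).1.1 i ≠ i := by decide +kernel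
    exact this _ k1 k2
end

section
/- Let d, e, f be the permutations of {0,…,12} given in cycle notation by d = (0 12)(1 10)(3 5)(6 7), e = (0 10)(3 4)(9 2)(5 8), f = (0 4)(9 12)(1 6)(2 11), and d' = (0 4)(2 3)(6 8)(9 10), e' = (0 12)(6 9)(5 11)(1 4), f' = (0 10)(5 1)(2 7)(3 12). Then the subgroup of Sym(13) × Sym(13) generated by (d,d'), (e,e'), (f,f') has order 5616, and both coordinate actions on {0,…,12} are transitive. -/
open Equiv

def gen (i : Fin 3) : Perm (Fin 13) × Perm (Fin 13) := ![(d, d'), (e, e'), (f, f')] i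

theorem gen_mem (i : Fin 3) : gen i ∈ G₀ := by
  apply Subgroup.subset_closure
  fin_cases i <;> simp [gen]

/-- The product of the generators along a word. -/
def wd (w : List (Fin 3)) : Perm (Fin 13) × Perm (Fin 13) := (w.map gen).prod

theorem wd_mem (w : List (Fin 3)) : wd w ∈ G₀ := by
  apply Subgroup.list_prod_mem
  intro x hx
  obtain ⟨i, _, rfl⟩ := List.mem_map.1 hx
  exact gen_mem i

/-- Bit mask of the set of lines through a point of the projective plane of order 3
(thirteen 13-bit blocks packed into one number). -/
def lineMask (x : Fin 13) : ℕ :=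
  (95569001814980550449331158939433059977520687915531 >>> (13 * x.val)) % 8192

/-- Incidence between points (first coordinate) and lines (second coordinate). -/
def Inc (x l : Fin 13) : Bool := (lineMask x).testBit l

/-- Collinearity of three points. -/
def Col (a b c : Fin 13) : Bool := (lineMask a &&& lineMask b &&& lineMask c) != 0

/-- Ordered quadrangles: no three of the points are collinear. -/
def Frame (q : Fin 13 × Fin 13 × Fin 13 × Fin 13) : Bool :=
  q.1 != q.2.1 && !Col q.1 q.2.1 q.2.2.1 && !Col q.1 q.2.1 q.2.2.2 && !Col q.1 q.2.2.1 q.2.2.2 &&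
    !Col q.2.1 q.2.2.1 q.2.2.2

theorem inc_gen : ∀ i x l, Inc ((gen i).1 x) ((gen i).2 l) = Inc x l := by
  decide +kernel

theorem col_gen : ∀ i a b c, Col ((gen i).1 a) ((gen i).1 b) ((gen i).1 c) = Col a b c := by
  decide +kernel

theorem mem_induct {C : Perm (Fin 13) × Perm (Fin 13) → Prop} (hg : ∀ i, C (gen i)) (h1 : C 1)
    (hm : ∀ p q, C p → C q → C (p * q)) (hi : ∀ p, C p → C p⁻¹) : ∀ p ∈ G₀, C p := by
  intro p hp
  induction hp using Subgroup.closure_induction with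
  | mem x hx =>
    rcases hx with rfl | rfl | rfl
    · exact hg 0
    · exact hg 1
    · exact hg 2
  | one => exact h1
  | mul x y _ _ hx hy => exact hm x y hx hy
  | inv x _ hx => exact hi x hx

theorem inc_mem : ∀ p ∈ G₀, ∀ x l, Inc (p.1 x) (p.2 l) = Inc x l := by
  refine mem_induct (C := fun p => ∀ x l, Inc (p.1 x) (p.2 l) = Inc x l) inc_gen ?_ ?_ ?_
  · intro x l; rfl
  · intro p q hp hq x l
    simp [Perm.mul_apply, hp, hq]
  · intro p hp x l
    rw [← hp]; simp

theorem col_mem : ∀ p ∈ G₀, ∀ a b c, Col (p.1 a) (p.1 b) (p.1 c) = Col a b c := by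
  refine mem_induct (C := fun p => ∀ a b c, Col (p.1 a) (p.1 b) (p.1 c) = Col a b c) col_gen ?_ ?_ ?_
  · intro a b c; rfl
  · intro p q hp hq a b c
    simp [Perm.mul_apply, hp, hq]
  · intro p hp a b c
    rw [← hp]; simp

theorem line_unique : ∀ a b, a ≠ b → ∀ l, Inc a l → Inc b l → ∀ k, Inc a k → Inc b k → k = l := by
  decide +kernel

theorem point_unique : ∀ l k, l ≠ k → ∀ a, Inc a l → Inc a k → ∀ b, Inc b l → Inc b k → b = a := by
  decide +kernel

theorem fix_line {p} (hp : p ∈ G₀) {a b : Fin 13} (l : Fin 13) (ha : p.1 a = a) (hb : p.1 b = b)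
    (h : a ≠ b ∧ Inc a l ∧ Inc b l) : p.2 l = l := by
  refine line_unique a b h.1 l h.2.1 h.2.2 _ ?_ ?_
  · have := inc_mem p hp a l
    rw [ha] at this; rw [this]; exact h.2.1
  · have := inc_mem p hp b l
    rw [hb] at this; rw [this]; exact h.2.2

theorem fix_point {p} (hp : p ∈ G₀) {l k : Fin 13} (a : Fin 13) (hl : p.2 l = l) (hk : p.2 k = k)
    (h : l ≠ k ∧ Inc a l ∧ Inc a k) : p.1 a = a := by
  refine point_unique l k h.1 a h.2.1 h.2.2 _ ?_ ?_
  · have := inc_mem p hp a l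
    rw [hl] at this; rw [this]; exact h.2.1
  · have := inc_mem p hp a k
    rw [hk] at this; rw [this]; exact h.2.2

/-- An element fixing the quadrangle `0, 1, 2, 5` is trivial. -/
theorem eq_one_of_fix {p} (hp : p ∈ G₀) (P0 : p.1 0 = 0) (P1 : p.1 1 = 1) (P2 : p.1 2 = 2)
    (P5 : p.1 5 = 5) : p = 1 := by
  have L0 := fix_line hp 0 P0 P1 (by decide)
  have L1 := fix_line hp 1 P0 P2 (by decide)
  have L8 := fix_line hp 8 P1 P5 (by decide)
  have L9 := fix_line hp 9 P0 P5 (by decide)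
  have L11 := fix_line hp 11 P2 P5 (by decide)
  have L12 := fix_line hp 12 P1 P2 (by decide)
  have P3 := fix_point hp 3 L0 L11 (by decide)
  have P4 := fix_point hp 4 L9 L12 (by decide)
  have P8 := fix_point hp 8 L1 L8 (by decide)
  have L5 := fix_line hp 5 P4 P8 (by decide)
  have L6 := fix_line hp 6 P3 P8 (by decide)
  have L10 := fix_line hp 10 P3 P4 (by decide)
  have P6 := fix_point hp 6 L8 L10 (by decide)
  have P7 := fix_point hp 7 L9 L6 (by decide)
  have P9 := fix_point hp 9 L0 L5 (by decide)
  have P10 := fix_point hp 10 L12 L6 (by decide)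
  have P11 := fix_point hp 11 L11 L5 (by decide)
  have P12 := fix_point hp 12 L1 L10 (by decide)
  have L2 := fix_line hp 2 P1 P7 (by decide)
  have L3 := fix_line hp 3 P0 P6 (by decide)
  have L4 := fix_line hp 4 P5 P9 (by decide)
  have L7 := fix_line hp 7 P2 P6 (by decide)
  apply Prod.ext
  · ext x
    fin_cases x <;> simp_all
  · ext x
    fin_cases x <;> simp_all

/-- Transversal words of level 0. -/
def tr0 (x : Fin 13) : List (Fin 3) :=
  ![[],
    [1, 0],
    [0, 2, 1],
    [2, 1],
    [2],
    [2, 1, 0],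
    [1, 0, 2],
    [1, 0, 2, 0],
    [2, 1, 0, 1],
    [0, 2],
    [1],
    [0, 2, 1, 2],
    [0]] x

theorem tr0_spec : ∀ b, 
    (wd (tr0 b)).1 b = 0 := by
  decide +kernel

/-- Transversal words of level 1. -/
def tr1 (x : Fin 13) : List (Fin 3) :=
  ![[],
    [],
    [0, 1, 0, 1, 2, 1],
    [1, 0, 2, 1, 2, 0, 1],
    [0, 2, 0, 1, 0, 1, 2, 0],
    [0, 2, 0, 1, 0, 1, 2, 1, 0],
    [1, 2, 1],
    [2, 0, 2],
    [0, 1, 2, 1, 0, 1, 2, 0],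
    [0, 2, 1, 0, 1, 2, 0],
    [1, 2, 1, 2, 0, 2],
    [0, 1, 0, 1, 2, 0, 1, 0, 2, 1],
    [0, 1, 0]] x

theorem tr1_spec : ∀ b, b ≠ 0 → 
    (wd (tr1 b)).1 0 = 0 ∧ (wd (tr1 b)).1 b = 1 := by
  decide +kernel

/-- Transversal words of level 2. -/
def tr2 (x : Fin 13) : List (Fin 3) :=
  ![[],
    [],
    [],
    [],
    [0, 2, 0, 2, 1, 0, 2, 0, 2],
    [0, 1, 2, 0, 2, 1, 0],
    [1, 2, 0, 1, 0, 2, 1],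
    [1, 0, 2, 0, 1, 0, 2, 0, 1],
    [1, 2, 0, 2, 1, 2, 0, 2, 1],
    [],
    [1, 2, 0, 1, 2, 1, 2, 0, 2, 1],
    [2, 1, 0, 1, 2, 1, 0, 1, 2],
    [2, 0, 1, 2, 1, 0, 2]] x

theorem tr2_spec : ∀ b, Col 0 1 b = false → 
    (wd (tr2 b)).1 0 = 0 ∧ (wd (tr2 b)).1 1 = 1 ∧ (wd (tr2 b)).1 b = 2 := by
  decide +kernel

/-- Transversal words of level 3. -/
def tr3 (x : Fin 13) : List (Fin 3) :=
  ![[],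
    [],
    [],
    [],
    [],
    [],
    [2, 0, 1, 2, 0, 1, 0, 1, 2, 0, 1, 2],
    [2, 0, 2, 1, 0, 2, 1, 2, 0, 1, 2, 0, 2],
    [],
    [],
    [],
    [0, 2, 1, 2, 0, 2, 1, 2, 0],
    []] x

theorem tr3_spec : ∀ b, Col 0 1 b = false → Col 0 2 b = false → Col 1 2 b = false → 
    (wd (tr3 b)).1 0 = 0 ∧ (wd (tr3 b)).1 1 = 1 ∧ (wd (tr3 b)).1 2 = 2 ∧ (wd (tr3 b)).1 b = 5 := by
  decide +kernel

/-- Transversal words for the second coordinate. -/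
def trL (x : Fin 13) : List (Fin 3) :=
  ![[],
    [0, 1],
    [1, 2, 0],
    [1, 2],
    [0],
    [0, 1, 2],
    [2, 0, 1],
    [1, 2, 0, 2],
    [2, 0, 1, 0],
    [2, 0],
    [2],
    [0, 1, 2, 1],
    [1]] x

theorem trL_spec : ∀ b, (wd (trL b)).2 b = 0 := by
  decide +kernel

theorem frame_iff (a b c x : Fin 13) : Frame (a, b, c, x) = true ↔
    a ≠ b ∧ Col a b c = false ∧ Col a b x = false ∧ Col a c x = false ∧ Col b c x = false := by
  simp [Frame, and_assoc]

theorem frame_mem {p} (hp : p ∈ G₀) (a b c x : Fin 13) :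
    Frame (p.1 a, p.1 b, p.1 c, p.1 x) = true ↔ Frame (a, b, c, x) = true := by
  simp [frame_iff, col_mem p hp]

/-- Every quadrangle can be moved to the standard one. -/
theorem frame_trans (a b c x : Fin 13) (h : Frame (a, b, c, x) = true) :
    ∃ p ∈ G₀, p.1 a = 0 ∧ p.1 b = 1 ∧ p.1 c = 2 ∧ p.1 x = 5 := by
  have m1 := wd_mem (tr0 a)
  have s1 := tr0_spec a
  generalize wd (tr0 a) = p1 at m1 s1
  have h1 := (frame_mem m1 _ _ _ _).2 h
  rw [s1] at h1
  have m2 := wd_mem (tr1 (p1.1 b))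
  obtain ⟨s2, s2b⟩ := tr1_spec (p1.1 b) ((frame_iff _ _ _ _).1 h1).1.symm
  generalize wd (tr1 (p1.1 b)) = p2 at m2 s2 s2b
  have h2 := (frame_mem m2 _ _ _ _).2 h1
  rw [s2, s2b] at h2
  have m3 := wd_mem (tr2 (p2.1 (p1.1 c)))
  obtain ⟨s3, s3b, s3c⟩ := tr2_spec (p2.1 (p1.1 c)) ((frame_iff _ _ _ _).1 h2).2.1
  generalize wd (tr2 (p2.1 (p1.1 c))) = p3 at m3 s3 s3b s3c
  have h3 := (frame_mem m3 _ _ _ _).2 h2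
  rw [s3, s3b, s3c] at h3
  obtain ⟨-, -, k1, k2, k3⟩ := (frame_iff _ _ _ _).1 h3
  have m4 := wd_mem (tr3 (p3.1 (p2.1 (p1.1 x))))
  obtain ⟨s4, s4b, s4c, s4d⟩ := tr3_spec (p3.1 (p2.1 (p1.1 x))) k1 k2 k3
  generalize wd (tr3 (p3.1 (p2.1 (p1.1 x)))) = p4 at m4 s4 s4b s4c s4d
  refine ⟨p4 * (p3 * (p2 * p1)), G₀.mul_mem m4 (G₀.mul_mem m3 (G₀.mul_mem m2 m1)), ?_⟩
  simp [Perm.mul_apply, s1, s2, s2b, s3, s3b, s3c, s4, s4b, s4c, s4d]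

theorem card_frames_zero :
    (∑ b : Fin 13, ∑ c : Fin 13, ∑ x : Fin 13,
      if Frame (0, b, c, x) = true then 1 else 0) = 432 := by
  decide +kernel

/-- By transitivity it is enough to count the quadrangles that start at `0`. -/
theorem card_frames :
    (∑ a : Fin 13, ∑ b : Fin 13, ∑ c : Fin 13, ∑ x : Fin 13,
      if Frame (a, b, c, x) = true then 1 else 0) = 5616 := by
  have key : ∀ a : Fin 13, (∑ b : Fin 13, ∑ c : Fin 13, ∑ x : Fin 13,
      if Frame (a, b, c, x) = true then 1 else 0) = 432 := by
    intro a
    have m1 := wd_mem (tr0 a)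
    have s1 := tr0_spec a
    generalize wd (tr0 a) = p at m1 s1
    rw [← card_frames_zero]
    symm
    rw [← Equiv.sum_comp p.1]
    refine Finset.sum_congr rfl fun b _ => ?_
    rw [← Equiv.sum_comp p.1]
    refine Finset.sum_congr rfl fun c _ => ?_
    rw [← Equiv.sum_comp p.1 (fun x => if Frame (0, p.1 b, p.1 c, x) = true then 1 else 0)]
    refine Finset.sum_congr rfl fun x _ => ?_
    have := frame_mem m1 a b c x
    rw [s1] at this
    simp only [this]
  simp only [key]
  simp

theorem base_frame : Frame (0, 1, 2, 5) = true := by decide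

/-- The image of the standard quadrangle. -/
def toFrame (p : G₀) : {q // Frame q = true} :=
  ⟨(p.1.1 0, p.1.1 1, p.1.1 2, p.1.1 5), (frame_mem p.2 _ _ _ _).2 base_frame⟩

theorem toFrame_bijective : Function.Bijective toFrame := by
  constructor
  · rintro ⟨p, hp⟩ ⟨q, hq⟩ h
    simp only [toFrame, Subtype.mk.injEq, Prod.mk.injEq] at h
    obtain ⟨h0, h1, h2, h5⟩ := h
    have := eq_one_of_fix (G₀.mul_mem (G₀.inv_mem hq) hp)
      (by simp [h0]) (by simp [h1]) (by simp [h2]) (by simp [h5])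
    exact Subtype.ext (inv_mul_eq_one.1 this).symm
  · rintro ⟨⟨a, b, c, x⟩, h⟩
    obtain ⟨p, hp, h0, h1, h2, h5⟩ := frame_trans a b c x h
    refine ⟨⟨p⁻¹, G₀.inv_mem hp⟩, ?_⟩
    simp [toFrame, ← h0, ← h1, ← h2, ← h5]

theorem card_G₀ : Nat.card G₀ = 5616 := by
  rw [Nat.card_congr (Equiv.ofBijective _ toFrame_bijective), Nat.card_eq_fintype_card,
    Fintype.card_subtype, Finset.card_filter]
  simp only [Fintype.sum_prod_type]
  exact card_frames

/-- `G₀` has order 5616 (the order of L₃(3)) and both coordinate actions on `Fin 13`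
are transitive. -/
theorem order_and_transitive :
    Nat.card G₀ = 5616 ∧
    (∀ x y : Fin 13, ∃ p ∈ G₀, p.1 x = y) ∧
    (∀ x y : Fin 13, ∃ p ∈ G₀, p.2 x = y) := by
  refine ⟨card_G₀, fun x y => ?_, fun x y => ?_⟩
  · refine ⟨(wd (tr0 y))⁻¹ * wd (tr0 x), G₀.mul_mem (G₀.inv_mem (wd_mem _)) (wd_mem _), ?_⟩
    simp only [Prod.fst_mul, Prod.fst_inv, Perm.mul_apply, Perm.inv_eq_iff_eq, tr0_spec]
  · refine ⟨(wd (trL y))⁻¹ * wd (trL x), G₀.mul_mem (G₀.inv_mem (wd_mem _)) (wd_mem _), ?_⟩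
    simp only [Prod.snd_mul, Prod.snd_inv, Perm.mul_apply, Perm.inv_eq_iff_eq, trL_spec]
end
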